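/- A countable hypergraph E in which any two distinct edges intersect in at most one point (i.e., |S ∩ T| ≤ 1 for distinct S, T ∈ E) has a minimal cover. -/

import Mathlib

/-- `C` is a cover of the hypergraph `E`. -/
def IsCover {α : Type*} (E C : Set (Set α)) : Prop :=
  C ⊆ E ∧ ⋃₀ C = ⋃₀ E

/-- `C` is a minimal cover of the hypergraph `E`. -/
def IsMinimalCover {α : Type*} (E C : Set (Set α)) : Prop :=
  IsCover E C ∧ ∀ D ⊆ C, IsCover E D → D = C

/-- `S` is a subhypergraph of `E`. -/
def IsSubhypergraph {α : Type*} (E S : Set (Set α)) : Prop :=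
  ∃ F ⊆ E, ∃ A ⊆ ⋃₀ F, S = (fun T => T ∩ A) '' F

/-- `S` has a maximal edge. -/
def HasMaximalEdge {α : Type*} (S : Set (Set α)) : Prop :=
  ∃ M ∈ S, ∀ T ∈ S, M ⊆ T → T = M

/-- `S` is isomorphic to the hypergraph ω, whose vertex set is ℕ and whose
edges are the initial segments `{0, …, n-1}` for `n : ℕ`. -/
def IsoToOmega {α : Type*} (S : Set (Set α)) : Prop :=
  ∃ f : ℕ → α, Function.Injective f ∧ Set.range f = ⋃₀ S ∧
    S = {T | ∃ n : ℕ, T = f '' Set.Iio n}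

/-- Invariant of a partial construction: chosen edges `p.1`, forbidden witnesses `p.2`. -/
def Inv8 {α : Type*} (E : Set (Set α)) (p : Set (Set α) × Set α) : Prop :=
  p.1 ⊆ E ∧ (∀ S ∈ p.1, ∃ x ∈ p.2, x ∈ S ∧ ∀ T ∈ p.1, x ∈ T → T = S) ∧
    ∀ y ∈ ⋃₀ E, y ∉ ⋃₀ p.1 → ∃ T ∈ E, y ∈ T ∧ ∀ x ∈ p.2, x ∉ T

/-- Extension of partial constructions. -/
def Ext8 {α : Type*} (p q : Set (Set α) × Set α) : Prop :=
  p.1 ⊆ q.1 ∧ p.2 ⊆ q.2 ∧ ∀ T ∈ q.1, T ∉ p.1 → ∀ x ∈ p.2, x ∉ T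

theorem Ext8.rfl' {α : Type*} (p : Set (Set α) × Set α) : Ext8 p p :=
  ⟨subset_rfl, subset_rfl, fun _ h h' => absurd h h'⟩

theorem Ext8.trans' {α : Type*} {p q r : Set (Set α) × Set α} (h : Ext8 p q) (h' : Ext8 q r) :
    Ext8 p r := by
  refine ⟨h.1.trans h'.1, h.2.1.trans h'.2.1, fun T hT hTp x hx => ?_⟩
  by_cases hq : T ∈ q.1
  · exact h.2.2 T hq hTp x hx
  · exact h'.2.2 T hT hq x (h.2.1 hx)

/-- Adding one edge `M` with witness `x`. -/
theorem add8 {α : Type*} {E : Set (Set α)} {p : Set (Set α) × Set α} (hp : Inv8 E p)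
    {M : Set α} {x : α} (hM : M ∈ E) (hxM : x ∈ M) (hx : x ∉ ⋃₀ p.1)
    (hMp : ∀ z ∈ p.2, z ∉ M)
    (hc : ∀ y ∈ ⋃₀ E, y ∉ ⋃₀ p.1 → y ∉ M → ∃ T ∈ E, y ∈ T ∧ x ∉ T ∧ ∀ z ∈ p.2, z ∉ T) :
    Inv8 E (insert M p.1, insert x p.2) ∧ Ext8 p (insert M p.1, insert x p.2) := by
  obtain ⟨h1, h2, h3⟩ := hp
  refine ⟨⟨?_, ?_, ?_⟩, ?_, ?_, ?_⟩
  · exact Set.insert_subset hM h1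
  · rintro S (rfl | hS)
    · refine ⟨x, Set.mem_insert _ _, hxM, ?_⟩
      rintro T (rfl | hT) hxT
      · rfl
      · exact absurd ⟨T, hT, hxT⟩ hx
    · obtain ⟨z, hz, hzS, hu⟩ := h2 S hS
      refine ⟨z, Set.mem_insert_of_mem _ hz, hzS, ?_⟩
      rintro T (rfl | hT) hzT
      · exact absurd hzT (hMp z hz)
      · exact hu T hT hzT
  · intro y hy hyn
    obtain ⟨T, hT, hyT, hxT, hz⟩ := hc y hy
      (fun ⟨S, hS, hyS⟩ => hyn ⟨S, Set.mem_insert_of_mem _ hS, hyS⟩)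
      (fun hyM => hyn ⟨M, Set.mem_insert _ _, hyM⟩)
    refine ⟨T, hT, hyT, ?_⟩
    rintro z (rfl | hz')
    · exact hxT
    · exact hz z hz'
  · exact Set.subset_insert _ _
  · exact Set.subset_insert _ _
  · rintro T (rfl | hT) hTn
    · exact hMp
    · exact absurd hT hTn

theorem step8 {α : Type*} {E : Set (Set α)}
    (h : ∀ S ∈ E, ∀ T ∈ E, S ≠ T → (S ∩ T).Subsingleton)
    {p : Set (Set α) × Set α} (hp : Inv8 E p) {v : α} (hv : v ∈ ⋃₀ E) :
    ∃ q, Inv8 E q ∧ Ext8 p q ∧ v ∈ ⋃₀ q.1 := by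
  by_cases hvp : v ∈ ⋃₀ p.1
  · exact ⟨p, hp, Ext8.rfl' p, hvp⟩
  obtain ⟨M, hM, hvM, hMp⟩ := hp.2.2 v hv hvp
  by_cases hc : ∀ y ∈ ⋃₀ E, y ∉ ⋃₀ p.1 → y ∉ M → ∃ T ∈ E, y ∈ T ∧ v ∉ T ∧ ∀ z ∈ p.2, z ∉ T
  · obtain ⟨a, b⟩ := add8 hp hM hvM hvp hMp hc
    exact ⟨_, a, b, M, Set.mem_insert _ _, hvM⟩
  · push Not at hc
    obtain ⟨y, hy, hyp, hyM, hyT⟩ := hc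
    -- every available edge through `y` contains `v`
    have key : ∀ T ∈ E, y ∈ T → (∀ z ∈ p.2, z ∉ T) → v ∈ T := by
      intro T hT hyT' hz
      by_contra hvT
      obtain ⟨z, hz1, hz2⟩ := hyT T hT hyT' hvT
      exact hz z hz1 hz2
    obtain ⟨N, hN, hyN, hNp⟩ := hp.2.2 y hy hyp
    have hvN := key N hN hyN hNp
    have hyv : y ≠ v := fun e => hyM (e ▸ hvM)
    obtain ⟨a, b⟩ := add8 hp hN hyN hyp hNp (by
      intro w hw hwp hwN
      obtain ⟨T, hT, hwT, hTp⟩ := hp.2.2 w hw hwp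
      refine ⟨T, hT, hwT, fun hyT' => ?_, hTp⟩
      have hne : T ≠ N := fun e => hwN (e ▸ hwT)
      exact hyv (h T hT N hN hne ⟨hyT', hyN⟩ ⟨key T hT hyT' hTp, hvN⟩))
    exact ⟨_, a, b, N, Set.mem_insert _ _, hvN⟩

theorem stmt_8 {α : Type*} (E : Set (Set α))
    (hEc : E.Countable) (hVc : (⋃₀ E).Countable)
    (h : ∀ S ∈ E, ∀ T ∈ E, S ≠ T → (S ∩ T).Subsingleton) :
    ∃ C, IsMinimalCover E C := by
  rcases (⋃₀ E).eq_empty_or_nonempty with he | hne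
  · refine ⟨∅, ⟨Set.empty_subset _, by simp [he]⟩, fun D hD _ => Set.subset_empty_iff.1 hD⟩
  obtain ⟨f, hf⟩ := hVc.exists_eq_range hne
  have hfm : ∀ n, f n ∈ ⋃₀ E := fun n => hf ▸ Set.mem_range_self n
  have hstep : ∀ (n : ℕ) (p : {p // Inv8 E p}), ∃ q : {p // Inv8 E p},
      Ext8 p.1 q.1 ∧ f n ∈ ⋃₀ q.1.1 := by
    intro n p
    obtain ⟨q, a, b, c⟩ := step8 h p.2 (hfm n)
    exact ⟨⟨q, a⟩, b, c⟩
  choose g hg1 hg2 using hstep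
  have h0 : Inv8 E ((∅, ∅) : Set (Set α) × Set α) := by
    refine ⟨Set.empty_subset _, by simp, ?_⟩
    rintro y ⟨T, hT, hy⟩ _
    exact ⟨T, hT, hy, by simp⟩
  let s : ℕ → {p // Inv8 E p} := fun n => Nat.rec ⟨_, h0⟩ (fun n p => g n p) n
  have hs : ∀ n, s (n + 1) = g n (s n) := fun n => rfl
  have hmono : ∀ m n, m ≤ n → Ext8 (s m).1 (s n).1 := by
    intro m n hmn
    induction n, hmn using Nat.le_induction with
    | base => exact Ext8.rfl' _
    | succ n _ ih => exact ih.trans' (hs n ▸ hg1 n (s n))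
  have hCE : (⋃ n, (s n).1.1) ⊆ E := Set.iUnion_subset fun n => (s n).2.1
  refine ⟨⋃ n, (s n).1.1, ⟨hCE, ?_⟩, ?_⟩
  · refine (Set.sUnion_subset_sUnion hCE).antisymm ?_
    intro v hv
    rw [hf] at hv
    obtain ⟨n, rfl⟩ := hv
    obtain ⟨T, hT, hv⟩ := hg2 n (s n)
    exact ⟨T, Set.mem_iUnion.2 ⟨n + 1, hT⟩, hv⟩
  · intro D hD hDc
    refine hD.antisymm ?_
    intro S hS
    obtain ⟨n, hSn⟩ := Set.mem_iUnion.1 hS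
    obtain ⟨x, hx, hxS, hu⟩ := (s n).2.2.1 S hSn
    have hxE : x ∈ ⋃₀ D := by
      rw [hDc.2]; exact ⟨S, hCE hS, hxS⟩
    obtain ⟨T, hTD, hxT⟩ := hxE
    obtain ⟨m, hTm⟩ := Set.mem_iUnion.1 (hD hTD)
    have hTS : T = S := by
      by_cases hTn : T ∈ (s n).1.1
      · exact hu T hTn hxT
      · rcases le_total m n with hmn | hmn
        · exact absurd ((hmono m n hmn).1 hTm) hTn
        · exact absurd hxT ((hmono n m hmn).2.2 T hTm hTn x hx)
    exact hTS ▸ hTD
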